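/- arXiv:2306.12576 — 7 statements merged into one kernel-verified Lean document; each statement's English description precedes it below -/
import Mathlib

section
/- Let X be a finite set, let ℓ ≥ 1 be an integer, let q ∈ (0,1)^X, and define p ∈ (0,1)^X by p_x = 1 - (1 - q_x)^{4⌊log₂(2ℓ)⌋ + 7} for each x ∈ X. For any ℓ-bounded family H ⊆ 2^X, if c_q(H) > 1/2, then Pr[X_p ∈ ⟨H⟩] > 1/2. -/
/-- The product measure `μ_p` on subsets of a finite set `X`:
`μ_p(S) = ∏_{x∈S} p_x · ∏_{y∉S} (1-p_y)`. -/
def prodMeasure {X : Type*} [Fintype X] [DecidableEq X] (p : X → ℝ) (S : Finset X) : ℝ :=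
  (∏ x ∈ S, p x) * ∏ x ∈ Sᶜ, (1 - p x)

/-- `⟨G⟩`: the up-closure of a family `G` of subsets of `X`. -/
def upClosure {X : Type*} [Fintype X] [DecidableEq X] (G : Finset (Finset X)) :
    Finset (Finset X) :=
  Finset.univ.filter (fun T => ∃ S ∈ G, S ⊆ T)

/-- `e_q(H) = Σ_{S∈H} ∏_{x∈S} q_x`. -/
def eCost {X : Type*} (q : X → ℝ) (H : Finset (Finset X)) : ℝ :=
  ∑ S ∈ H, ∏ x ∈ S, q x

/-- The `q`-cost `c_q(H) = min{e_q(G) : H ⊆ ⟨G⟩}`. -/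
noncomputable def qCost {X : Type*} [Fintype X] [DecidableEq X] (q : X → ℝ)
    (H : Finset (Finset X)) : ℝ :=
  sInf {c : ℝ | ∃ G : Finset (Finset X), H ⊆ upClosure G ∧ c = eCost q G}

/-- `Pr[X_p ∈ ⟨H⟩]`, where `X_p` is sampled from `μ_p`. -/
def prInUpClosure {X : Type*} [Fintype X] [DecidableEq X] (p : X → ℝ)
    (H : Finset (Finset X)) : ℝ :=
  ∑ S ∈ upClosure H, prodMeasure p S

section KK
open Finset

variable {X : Type*} [DecidableEq X]

/-- expectation over subsets of `s`. -/
def kkE (s : Finset X) (p : X → ℝ) (g : Finset X → ℝ) : ℝ :=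
  ∑ S ∈ s.powerset, (∏ x ∈ s, if x ∈ S then p x else 1 - p x) * g S

lemma kkE_insert (s : Finset X) (a : X) (ha : a ∉ s) (p : X → ℝ) (g : Finset X → ℝ) :
    kkE (insert a s) p g =
      (1 - p a) * kkE s p g + p a * kkE s p (fun S => g (insert a S)) := by
  unfold kkE
  rw [Finset.sum_powerset_insert ha, Finset.mul_sum, Finset.mul_sum]
  congr 1
  · apply Finset.sum_congr rfl
    intro S hS
    have hS' := Finset.mem_powerset.1 hS
    have : a ∉ S := fun h => ha (hS' h)
    rw [Finset.prod_insert ha, if_neg this]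
    ring
  · apply Finset.sum_congr rfl
    intro S hS
    rw [Finset.prod_insert ha, if_pos (Finset.mem_insert_self a S)]
    have : ∏ x ∈ s, (if x ∈ insert a S then p x else 1 - p x)
        = ∏ x ∈ s, (if x ∈ S then p x else 1 - p x) := by
      apply Finset.prod_congr rfl
      intro x hx
      have hxa : x ≠ a := fun h => ha (h ▸ hx)
      simp [Finset.mem_insert, hxa]
    rw [this]
    ring

lemma kkE_lin (s : Finset X) (p : X → ℝ) (a b : ℝ) (g h : Finset X → ℝ) :
    kkE s p (fun S => a * g S + b * h S) = a * kkE s p g + b * kkE s p h := by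
  unfold kkE
  rw [Finset.mul_sum, Finset.mul_sum, ← Finset.sum_add_distrib]
  apply Finset.sum_congr rfl
  intros; ring

lemma kkE_conv (a b p : X → ℝ) (h : ∀ x, 1 - p x = (1 - a x) * (1 - b x)) (s : Finset X) :
    ∀ g : Finset X → ℝ,
      kkE s p g = kkE s a (fun A => kkE s b (fun B => g (A ∪ B))) := by
  induction s using Finset.induction_on with
  | empty => intro g; simp [kkE]
  | insert x s hx ih =>
    intro g
    have e : ∀ A : Finset X, kkE (insert x s) b (fun B => g (A ∪ B)) =
        (1 - b x) * kkE s b (fun B => g (A ∪ B))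
          + b x * kkE s b (fun B => g (insert x (A ∪ B))) := by
      intro A
      rw [kkE_insert s x hx]
      simp only [Finset.union_insert]
    simp only [e]
    rw [kkE_insert s x hx, kkE_insert s x hx, kkE_lin, kkE_lin, ih, ih]
    simp only [Finset.insert_union, Finset.insert_idem]
    have hpx : p x = 1 - (1 - a x) * (1 - b x) := by linarith [h x]
    rw [hpx]
    ring

variable [Fintype X]

lemma prodMeasure_eq (p : X → ℝ) (S : Finset X) :
    prodMeasure p S = ∏ x, if x ∈ S then p x else 1 - p x := by
  unfold prodMeasure
  rw [Finset.prod_ite]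
  congr 1
  · apply Finset.prod_congr _ (fun _ _ => rfl)
    ext; simp
  · apply Finset.prod_congr _ (fun _ _ => rfl)
    ext; simp

lemma kkE_univ (p : X → ℝ) (g : Finset X → ℝ) :
    kkE univ p g = ∑ S, prodMeasure p S * g S := by
  unfold kkE
  simp only [prodMeasure_eq, Finset.powerset_univ]

lemma kkE_one (p : X → ℝ) (s : Finset X) : kkE s p (fun _ => 1) = 1 := by
  induction s using Finset.induction_on with
  | empty => simp [kkE]
  | insert x s hx ih => rw [kkE_insert s x hx, ih]; ring

lemma prodMeasure_nonneg (p : X → ℝ) (hp : ∀ x, 0 ≤ p x ∧ p x ≤ 1) (S : Finset X) :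
    0 ≤ prodMeasure p S := by
  rw [prodMeasure_eq]
  apply Finset.prod_nonneg
  intro x _
  split_ifs
  · exact (hp x).1
  · linarith [(hp x).2]

lemma pr_eq (p : X → ℝ) (H : Finset (Finset X)) :
    prInUpClosure p H = kkE univ p (fun S => if S ∈ upClosure H then 1 else 0) := by
  rw [kkE_univ]
  unfold prInUpClosure
  simp

lemma pr_nonneg (p : X → ℝ) (hp : ∀ x, 0 ≤ p x ∧ p x ≤ 1) (H : Finset (Finset X)) :
    0 ≤ prInUpClosure p H :=
  Finset.sum_nonneg (fun S _ => prodMeasure_nonneg p hp S)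

lemma sum_prodMeasure (p : X → ℝ) : ∑ S, prodMeasure p S = 1 := by
  have := kkE_one p univ
  rw [kkE_univ] at this
  simpa using this

lemma pr_le_one (p : X → ℝ) (hp : ∀ x, 0 ≤ p x ∧ p x ≤ 1) (H : Finset (Finset X)) :
    prInUpClosure p H ≤ 1 := by
  rw [← sum_prodMeasure p]
  exact Finset.sum_le_sum_of_subset_of_nonneg (Finset.subset_univ _)
    (fun S _ _ => prodMeasure_nonneg p hp S)

lemma pr_of_empty_mem (p : X → ℝ) (H : Finset (Finset X)) (h : ∅ ∈ H) :
    prInUpClosure p H = 1 := by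
  rw [← sum_prodMeasure p]
  unfold prInUpClosure
  congr 1
  ext T
  simp only [upClosure, Finset.mem_filter, Finset.mem_univ, true_and, iff_true]
  exact ⟨∅, h, Finset.empty_subset _⟩

open Classical in
/-- minimal fragments -/
noncomputable def kkM (H : Finset (Finset X)) (W : Finset X) : Finset (Finset X) :=
  (H.image (fun S => S \ W)).filter (fun T => Minimal (· ∈ H.image (fun S => S \ W)) T)

lemma kkM_mem {H : Finset (Finset X)} {W T : Finset X} (hT : T ∈ kkM H W) :
    (∃ S ∈ H, S \ W = T) ∧ ∀ S ∈ H, S ⊆ W ∪ T → T ⊆ S := by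
  classical
  unfold kkM at hT
  rw [Finset.mem_filter] at hT
  obtain ⟨h1, h2⟩ := hT
  refine ⟨by simpa using h1, ?_⟩
  intro S hS hST
  have h3 : S \ W ⊆ T := by
    intro x hx
    rw [Finset.mem_sdiff] at hx
    have := hST hx.1
    rw [Finset.mem_union] at this
    tauto
  have h4 : T ≤ S \ W := h2.2 (Finset.mem_image_of_mem _ hS) h3
  exact h4.trans Finset.sdiff_subset

lemma kkM_cover {H : Finset (Finset X)} {W S : Finset X} (hS : S ∈ H) :
    ∃ T ∈ kkM H W, T ⊆ S := by
  obtain ⟨T, hT, hmin⟩ := (H.image (fun S => S \ W)).exists_le_minimal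
    (Finset.mem_image_of_mem (fun S => S \ W) hS)
  refine ⟨T, ?_, hT.trans Finset.sdiff_subset⟩
  classical
  unfold kkM
  rw [Finset.mem_filter]
  exact ⟨hmin.1, hmin⟩

/-- large -/
noncomputable def kkU (m : ℕ) (H : Finset (Finset X)) (W : Finset X) : Finset (Finset X) :=
  (kkM H W).filter (fun T => m ≤ T.card)

/-- small -/
noncomputable def kkS (m : ℕ) (H : Finset (Finset X)) (W : Finset X) : Finset (Finset X) :=
  (kkM H W).filter (fun T => T.card < m)

lemma mem_up {G : Finset (Finset X)} {T : Finset X} :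
    T ∈ upClosure G ↔ ∃ S ∈ G, S ⊆ T := by simp [upClosure]

lemma eCost_nonneg (q : X → ℝ) (hq : ∀ x, 0 ≤ q x) (G : Finset (Finset X)) :
    0 ≤ eCost q G :=
  Finset.sum_nonneg (fun _ _ => Finset.prod_nonneg (fun x _ => hq x))

lemma eCost_union (q : X → ℝ) (hq : ∀ x, 0 ≤ q x) (G G' : Finset (Finset X)) :
    eCost q (G ∪ G') ≤ eCost q G + eCost q G' := by
  have h := Finset.sum_union_inter (s₁ := G) (s₂ := G') (f := fun S => ∏ x ∈ S, q x)
  have h2 := eCost_nonneg q hq (G ∩ G')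
  unfold eCost at *
  linarith

lemma kkS_cover (m : ℕ) (H : Finset (Finset X)) (W : Finset X) (G : Finset (Finset X))
    (h : kkS m H W ⊆ upClosure G) : H ⊆ upClosure (G ∪ kkU m H W) := by
  intro S hS
  obtain ⟨T, hT, hTS⟩ := kkM_cover (W := W) hS
  rw [mem_up]
  by_cases hc : T.card < m
  · have : T ∈ kkS m H W := by simp [kkS, hT, hc]
    obtain ⟨R, hR, hRT⟩ := mem_up.1 (h this)
    exact ⟨R, Finset.mem_union_left _ hR, hRT.trans hTS⟩
  · refine ⟨T, Finset.mem_union_right _ ?_, hTS⟩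
    simp only [kkU, Finset.mem_filter]
    exact ⟨hT, by omega⟩

lemma kkS_empty_mem (m : ℕ) (hm : 0 < m) (H : Finset (Finset X)) (W : Finset X)
    (h : W ∈ upClosure H) : ∅ ∈ kkS m H W := by
  obtain ⟨S, hS, hSW⟩ := mem_up.1 h
  have h0 : S \ W = ∅ := Finset.sdiff_eq_empty_iff_subset.2 hSW
  have hmem : (∅ : Finset X) ∈ H.image (fun S => S \ W) :=
    Finset.mem_image.2 ⟨S, hS, h0⟩
  simp only [kkS, kkM, Finset.mem_filter]
  exact ⟨⟨hmem, hmem, fun _ _ _ => Finset.empty_subset _⟩, by simpa using hm⟩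

lemma kkS_up (m : ℕ) (H : Finset (Finset X)) (W B : Finset X)
    (h : B ∈ upClosure (kkS m H W)) : W ∪ B ∈ upClosure H := by
  obtain ⟨T, hT, hTB⟩ := mem_up.1 h
  obtain ⟨⟨S, hS, hST⟩, -⟩ := kkM_mem (Finset.mem_filter.1 hT).1
  refine mem_up.2 ⟨S, hS, ?_⟩
  intro x hx
  by_cases hxW : x ∈ W
  · exact Finset.mem_union_left _ hxW
  · exact Finset.mem_union_right _ (hTB (hST ▸ Finset.mem_sdiff.2 ⟨hx, hxW⟩))

lemma weight_le (q w : X → ℝ) (hq : ∀ x, q x ∈ Set.Ioo (0 : ℝ) 1)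
    (hw : ∀ x, w x = 1 - (1 - q x) ^ 4) (W T : Finset X) (hd : Disjoint T W) :
    prodMeasure w W * ∏ x ∈ T, q x ≤ prodMeasure w (W ∪ T) * (1 / 4) ^ T.card := by
  have e1 : ∏ x ∈ T, q x = ∏ x, if x ∈ T then q x else 1 := by simp
  have e2 : (1 / 4 : ℝ) ^ T.card = ∏ x, if x ∈ T then (1 / 4 : ℝ) else 1 := by
    simp
  rw [e1, e2, prodMeasure_eq, prodMeasure_eq, ← Finset.prod_mul_distrib,
    ← Finset.prod_mul_distrib]
  have hw01 : ∀ x, 0 ≤ w x ∧ w x ≤ 1 := by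
    intro x
    obtain ⟨h0, h1⟩ := hq x
    rw [hw]
    have a : 0 ≤ (1 - q x) ^ 4 := by positivity
    have b : (1 - q x) ^ 4 ≤ 1 := pow_le_one₀ (by linarith) (by linarith)
    constructor <;> linarith
  apply Finset.prod_le_prod
  · intro x _
    have := hw01 x
    have := (hq x).1
    apply mul_nonneg <;> split_ifs <;> linarith
  · intro x _
    by_cases hT : x ∈ T
    · have hW : x ∉ W := Finset.disjoint_left.1 hd hT
      simp only [hT, hW, if_true, if_false, Finset.mem_union, or_true]
      rw [hw]
      obtain ⟨h0, h1⟩ := hq x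
      obtain ⟨u, hu⟩ : ∃ u, u = 1 - q x := ⟨_, rfl⟩
      have hqx : q x = 1 - u := by linarith
      rw [← hu, hqx]
      have u0 : 0 < u := by linarith
      have u1 : u < 1 := by linarith
      have p2 : u ^ 4 ≤ u := by simpa using pow_le_pow_of_le_one u0.le u1.le (show 1 ≤ 4 by norm_num)
      have p3 : u ^ 4 ≤ u ^ 2 := pow_le_pow_of_le_one u0.le u1.le (by norm_num)
      have p4 : u ^ 4 ≤ u ^ 3 := pow_le_pow_of_le_one u0.le u1.le (by norm_num)
      have p5 : u ^ 4 ≤ 1 := pow_le_one₀ u0.le u1.le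
      have := mul_nonneg (by linarith : 0 ≤ 1 - u)
        (by linarith : 0 ≤ 1 + u + u ^ 2 + u ^ 3 - 4 * u ^ 4)
      nlinarith
    · simp [hT]

lemma exp_kkU (q w : X → ℝ) (hq : ∀ x, q x ∈ Set.Ioo (0 : ℝ) 1)
    (hw : ∀ x, w x = 1 - (1 - q x) ^ 4) (hw01 : ∀ x, 0 ≤ w x ∧ w x ≤ 1)
    (m : ℕ) (H : Finset (Finset X)) (hH : ∀ S ∈ H, S.card < 2 * m) :
    ∑ W, prodMeasure w W * eCost q (kkU m H W) ≤ prInUpClosure w H / 2 := by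
  classical
  have hch : ∀ Z : Finset X, ∃ S : Finset X, Z ∈ upClosure H → S ∈ H ∧ S ⊆ Z := by
    intro Z
    by_cases hZ : Z ∈ upClosure H
    · obtain ⟨S, hS, h⟩ := mem_up.1 hZ
      exact ⟨S, fun _ => ⟨hS, h⟩⟩
    · exact ⟨∅, fun h => absurd h hZ⟩
  choose φ hφ using hch
  have key : ∀ W T, T ∈ kkU m H W →
      Disjoint T W ∧ m ≤ T.card ∧ W ∪ T ∈ upClosure H ∧ T ⊆ φ (W ∪ T) := by
    intro W T hT
    obtain ⟨hM, hc⟩ := Finset.mem_filter.1 hT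
    obtain ⟨⟨S, hS, hST⟩, hmin⟩ := kkM_mem hM
    have hup : W ∪ T ∈ upClosure H := by
      refine mem_up.2 ⟨S, hS, ?_⟩
      rw [← hST]
      intro x hx
      by_cases hxW : x ∈ W <;> simp [hx, hxW]
    refine ⟨hST ▸ Finset.sdiff_disjoint, hc, hup, ?_⟩
    obtain ⟨h1, h2⟩ := hφ _ hup
    exact hmin _ h1 h2
  set g : (Σ _ : Finset X, Finset X) → ℝ := fun z => prodMeasure w z.1 * (1 / 4) ^ z.2.card
  set A : Finset (Σ _ : Finset X, Finset X) := univ.sigma (fun W => kkU m H W)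
  set B : Finset (Σ _ : Finset X, Finset X) :=
    (upClosure H).sigma (fun Z => (φ Z).powerset.filter (fun T => m ≤ T.card))
  set f : (Σ _ : Finset X, Finset X) → (Σ _ : Finset X, Finset X) :=
    fun z => ⟨z.1 ∪ z.2, z.2⟩
  have hgn : ∀ z, 0 ≤ g z := fun z =>
    mul_nonneg (prodMeasure_nonneg w hw01 _) (by positivity)
  calc ∑ W, prodMeasure w W * eCost q (kkU m H W)
      = ∑ z ∈ A, prodMeasure w z.1 * ∏ x ∈ z.2, q x := by
        rw [Finset.sum_sigma]
        simp only [eCost, Finset.mul_sum]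
    _ ≤ ∑ z ∈ A, g (f z) := by
        apply Finset.sum_le_sum
        intro z hz
        have hz2 := (Finset.mem_sigma.1 hz).2
        exact weight_le q w hq hw z.1 z.2 (key _ _ hz2).1
    _ = ∑ z ∈ A.image f, g z := by
        rw [Finset.sum_image]
        rintro ⟨W, T⟩ h1 ⟨W', T'⟩ h2 h
        have h1' := (key _ _ (Finset.mem_sigma.1 h1).2).1
        have h2' := (key _ _ (Finset.mem_sigma.1 h2).2).1
        simp only [f, Sigma.mk.injEq, heq_eq_eq] at h
        obtain ⟨ha, hb⟩ := h
        subst hb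
        simp only at h1' h2'
        have : W = W' := by
          rw [← Finset.union_sdiff_cancel_right h1'.symm, ha,
            Finset.union_sdiff_cancel_right h2'.symm]
        rw [this]
    _ ≤ ∑ z ∈ B, g z := by
        apply Finset.sum_le_sum_of_subset_of_nonneg _ (fun z _ _ => hgn z)
        intro z hz
        obtain ⟨⟨W, T⟩, hy, rfl⟩ := Finset.mem_image.1 hz
        obtain ⟨-, k2, k3, k4⟩ := key _ _ (Finset.mem_sigma.1 hy).2
        simp only [B, f, Finset.mem_sigma, Finset.mem_filter, Finset.mem_powerset]
        exact ⟨k3, k4, k2⟩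
    _ = ∑ Z ∈ upClosure H, prodMeasure w Z *
          ∑ T ∈ (φ Z).powerset.filter (fun T => m ≤ T.card), (1 / 4 : ℝ) ^ T.card := by
        rw [Finset.sum_sigma]
        simp only [g, Finset.mul_sum]
    _ ≤ ∑ Z ∈ upClosure H, prodMeasure w Z * (1 / 2) := by
        apply Finset.sum_le_sum
        intro Z hZ
        apply mul_le_mul_of_nonneg_left _ (prodMeasure_nonneg w hw01 Z)
        have hcard := hH _ (hφ Z hZ).1
        calc ∑ T ∈ (φ Z).powerset.filter (fun T => m ≤ T.card), (1 / 4 : ℝ) ^ T.card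
            ≤ ∑ T ∈ (φ Z).powerset.filter (fun T => m ≤ T.card), (1 / 4 : ℝ) ^ m := by
              apply Finset.sum_le_sum
              intro T hT
              exact pow_le_pow_of_le_one (by norm_num) (by norm_num) (Finset.mem_filter.1 hT).2
          _ ≤ ∑ T ∈ (φ Z).powerset, (1 / 4 : ℝ) ^ m :=
              Finset.sum_le_sum_of_subset_of_nonneg (Finset.filter_subset _ _)
                (fun _ _ _ => by positivity)
          _ = 2 ^ (φ Z).card * (1 / 4 : ℝ) ^ m := by
              rw [Finset.sum_const, Finset.card_powerset, nsmul_eq_mul]; push_cast; ring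
          _ ≤ 1 / 2 := by
              have h2 : (2 : ℝ) ^ ((φ Z).card + 1) ≤ 2 ^ (2 * m) :=
                pow_le_pow_right₀ (by norm_num) (by omega)
              rw [pow_succ, pow_mul] at h2
              rw [one_div_pow, mul_one_div, div_le_iff₀ (by positivity)]
              norm_num at h2 ⊢
              linarith
    _ = prInUpClosure w H / 2 := by
        unfold prInUpClosure
        rw [← Finset.sum_mul]; ring

lemma p01 (q : X → ℝ) (hq : ∀ x, q x ∈ Set.Ioo (0 : ℝ) 1) (n : ℕ) (p : X → ℝ)
    (hp : ∀ x, p x = 1 - (1 - q x) ^ n) : ∀ x, 0 ≤ p x ∧ p x ≤ 1 := by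
  intro x
  obtain ⟨h0, h1⟩ := hq x
  rw [hp]
  have a : 0 ≤ (1 - q x) ^ n := pow_nonneg (by linarith) _
  have b : (1 - q x) ^ n ≤ 1 := pow_le_one₀ (by linarith) (by linarith)
  constructor <;> linarith

lemma kk_main (q : X → ℝ) (hq : ∀ x, q x ∈ Set.Ioo (0 : ℝ) 1) (r : ℕ) :
    ∀ (p : X → ℝ), (∀ x, p x = 1 - (1 - q x) ^ (4 * r + 7)) →
    ∀ (H : Finset (Finset X)), (∀ S ∈ H, S.card < 2 ^ r) →
    ∀ c : ℝ, (∀ G, H ⊆ upClosure G → c ≤ eCost q G) →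
      c * (1 - prInUpClosure p H) ≤ prInUpClosure p H / 2 := by
  induction r with
  | zero =>
    intro p hp H hH c hc
    by_cases h : ∅ ∈ H
    · rw [pr_of_empty_mem p H h]; norm_num
    · have hE : H = ∅ := by
        apply Finset.eq_empty_of_forall_notMem
        intro S hS
        have := hH S hS
        have h0 : S = ∅ := by
          rw [← Finset.card_eq_zero]; simpa using this
        exact h (h0 ▸ hS)
      have h1 : c ≤ 0 := by
        have := hc ∅ (by simp [hE])
        simpa [eCost] using this
      have h2 := pr_nonneg p (p01 q hq _ p hp) H
      have h3 := pr_le_one p (p01 q hq _ p hp) H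
      nlinarith
  | succ r ih =>
    intro p hp H hH c hc
    have hp01 := p01 q hq _ p hp
    have hP0 := pr_nonneg p hp01 H
    have hP1 := pr_le_one p hp01 H
    rcases lt_or_ge c 0 with hc0 | hc0
    · nlinarith
    obtain ⟨w, hw⟩ : ∃ w : X → ℝ, ∀ x, w x = 1 - (1 - q x) ^ 4 := ⟨_, fun _ => rfl⟩
    obtain ⟨p', hp'⟩ : ∃ p' : X → ℝ, ∀ x, p' x = 1 - (1 - q x) ^ (4 * r + 7) :=
      ⟨_, fun _ => rfl⟩
    have hw01 := p01 q hq _ w hw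
    have hp'01 := p01 q hq _ p' hp'
    have hconv : ∀ x, 1 - p x = (1 - w x) * (1 - p' x) := by
      intro x; rw [hp, hw, hp']; ring
    set m := 2 ^ r with hm
    have hm0 : 0 < m := by positivity
    obtain ⟨PW, hPW⟩ : ∃ PW : Finset X → ℝ, ∀ W, PW W = prInUpClosure p' (kkS m H W) :=
      ⟨_, fun _ => rfl⟩
    have hge : ∑ W, prodMeasure w W * PW W ≤ prInUpClosure p H := by
      rw [pr_eq p, kkE_conv w p' p hconv, kkE_univ]
      apply Finset.sum_le_sum
      intro W _
      apply mul_le_mul_of_nonneg_left _ (prodMeasure_nonneg w hw01 W)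
      rw [hPW, pr_eq, kkE_univ, kkE_univ]
      apply Finset.sum_le_sum
      intro B _
      apply mul_le_mul_of_nonneg_left _ (prodMeasure_nonneg p' hp'01 B)
      by_cases hB : B ∈ upClosure (kkS m H W)
      · simp [hB, kkS_up m H W B hB]
      · rw [if_neg hB]; split_ifs <;> norm_num
    have hpt : ∀ W, c * (1 - PW W) ≤ eCost q (kkU m H W) + PW W / 2
        - (if W ∈ upClosure H then 1 / 2 else 0) := by
      intro W
      have hq0 : ∀ x, 0 ≤ q x := fun x => (hq x).1.le
      have hU := eCost_nonneg q hq0 (kkU m H W)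
      by_cases hW : W ∈ upClosure H
      · rw [if_pos hW, hPW, pr_of_empty_mem p' _ (kkS_empty_mem m hm0 H W hW)]
        linarith
      · rw [if_neg hW]
        have h := ih p' hp' (kkS m H W) (fun S hS => (Finset.mem_filter.1 hS).2)
          (c - eCost q (kkU m H W)) (by
            intro G hG
            have h1 := hc _ (kkS_cover m H W G hG)
            have h2 := eCost_union q hq0 G (kkU m H W)
            linarith)
        rw [← hPW] at h
        have h0 : 0 ≤ PW W := by rw [hPW]; exact pr_nonneg p' hp'01 _
        nlinarith
    have hexp := exp_kkU q w hq hw hw01 m H (fun S hS => by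
      have := hH S hS
      rw [pow_succ] at this
      omega)
    have hsum : ∑ W, prodMeasure w W * (c * (1 - PW W)) ≤
        ∑ W, prodMeasure w W * (eCost q (kkU m H W) + PW W / 2
        - (if W ∈ upClosure H then 1 / 2 else 0)) :=
      Finset.sum_le_sum (fun W _ =>
        mul_le_mul_of_nonneg_left (hpt W) (prodMeasure_nonneg w hw01 W))
    have hL : ∑ W, prodMeasure w W * (c * (1 - PW W))
        = c * (1 - ∑ W, prodMeasure w W * PW W) := by
      have e := sum_prodMeasure w
      rw [show c * (1 - ∑ W, prodMeasure w W * PW W) =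
        c * (∑ W, prodMeasure w W - ∑ W, prodMeasure w W * PW W) by rw [e],
        ← Finset.sum_sub_distrib, Finset.mul_sum]
      apply Finset.sum_congr rfl
      intros; ring
    have hR : ∑ W, prodMeasure w W * (eCost q (kkU m H W) + PW W / 2
        - (if W ∈ upClosure H then 1 / 2 else 0))
        = ∑ W, prodMeasure w W * eCost q (kkU m H W) + (∑ W, prodMeasure w W * PW W) / 2
          - prInUpClosure w H / 2 := by
      have : prInUpClosure w H / 2
          = ∑ W, prodMeasure w W * (if W ∈ upClosure H then 1 / 2 else 0) := by
        unfold prInUpClosure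
        simp [Finset.sum_div, div_eq_mul_inv, Finset.sum_mul]
      rw [this, Finset.sum_div, ← Finset.sum_add_distrib, ← Finset.sum_sub_distrib]
      apply Finset.sum_congr rfl
      intros; ring
    rw [hL, hR] at hsum
    nlinarith

end KK

/-- Theorem 1: for `p_x = 1 - (1-q_x)^{4⌊log₂(2ℓ)⌋+7}`, if `H` is `ℓ`-bounded
and `c_q(H) > 1/2`, then `Pr[X_p ∈ ⟨H⟩] > 1/2`. -/
theorem kahn_kalai_product {X : Type*} [Fintype X] [DecidableEq X]
    (ℓ : ℕ) (hℓ : 1 ≤ ℓ)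
    (q : X → ℝ) (hq : ∀ x, q x ∈ Set.Ioo (0 : ℝ) 1)
    (p : X → ℝ) (hp : ∀ x, p x = 1 - (1 - q x) ^ (4 * Nat.log 2 (2 * ℓ) + 7))
    (H : Finset (Finset X)) (hbd : ∀ S ∈ H, S.card ≤ ℓ)
    (hcost : 1 / 2 < qCost q H) :
    1 / 2 < prInUpClosure p H := by
  have hq0 : ∀ x, 0 ≤ q x := fun x => (hq x).1.le
  have hl : ∀ S ∈ H, S.card < 2 ^ Nat.log 2 (2 * ℓ) := by
    intro S hS
    have h1 := hbd S hS
    have h2 : 2 * ℓ < 2 ^ (Nat.log 2 (2 * ℓ) + 1) := Nat.lt_pow_succ_log_self (by norm_num) _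
    rw [pow_succ] at h2
    omega
  have h := kk_main q hq _ p hp H hl (qCost q H) (by
    intro G hG
    apply csInf_le
    · refine ⟨0, ?_⟩
      rintro c ⟨G', -, rfl⟩
      exact eCost_nonneg q hq0 G'
    · exact ⟨G, hG, rfl⟩)
  have h1 := pr_le_one p (p01 q hq _ p hp) H
  by_contra hcon
  push Not at hcon
  nlinarith
end

section
/- Let X be a finite set, L ≥ 1 a real number, ℓ ≥ m ≥ 1 integers, q ∈ (0,1)^X, and define p ∈ (0,1)^X by p_x = 1 - (1 - q_x)^L for each x ∈ X. If H ⊆ 2^X is ℓ-bounded, then E[c_q(L_m(H, X_p))] ≤ Pr[X_p ∈ ⟨H⟩] · Σ_{j=m}^{ℓ} (1/L^j) · binom(ℓ, j), where the expectation is over the random set X_p sampled from μ_p. -/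
/-- The fragments `F(H, W) = {S \ W : S ∈ H}`. -/
def fragments {X : Type*} [DecidableEq X] (H : Finset (Finset X)) (W : Finset X) :
    Finset (Finset X) :=
  H.image (fun S => S \ W)

/-- The minimal fragments `F*(H, W)`: inclusion-wise minimal elements of `F(H, W)`. -/
def minFragments {X : Type*} [DecidableEq X] (H : Finset (Finset X)) (W : Finset X) :
    Finset (Finset X) :=
  (fragments H W).filter (fun T => ∀ T' ∈ fragments H W, T' ⊆ T → T' = T)

/-- The large minimal fragments `L_m(H, W) = {T ∈ F*(H, W) : |T| ≥ m}`. -/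
def largeFrag {X : Type*} [DecidableEq X] (m : ℕ) (H : Finset (Finset X)) (W : Finset X) :
    Finset (Finset X) :=
  (minFragments H W).filter (fun T => m ≤ T.card)

/-- The small minimal fragments `S_m(H, W) = {T ∈ F*(H, W) : |T| < m}`. -/
def smallFrag {X : Type*} [DecidableEq X] (m : ℕ) (H : Finset (Finset X)) (W : Finset X) :
    Finset (Finset X) :=
  (minFragments H W).filter (fun T => T.card < m)

theorem key_ineq (L a : ℝ) (hL : 1 ≤ L) (h0 : 0 < a) (h1 : a < 1) :
    (1 - a) ^ L * a ≤ (1 - (1 - a) ^ L) * (1 / L) := by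
  have hL0 : 0 < L := by linarith
  have h2 : (1 - a) ^ L ≤ Real.exp (-(L * a)) := by
    have : (1 - a) ^ L ≤ (Real.exp (-a)) ^ L := by
      apply Real.rpow_le_rpow (by linarith) _ hL0.le
      have := Real.add_one_le_exp (-a); linarith
    refine this.trans (le_of_eq ?_)
    rw [← Real.exp_mul]; congr 1; ring
  have h3 : 1 + L * a ≤ Real.exp (L * a) := by
    have := Real.add_one_le_exp (L * a); linarith
  have h4 : (1 - a) ^ L * (1 + L * a) ≤ 1 := by
    calc (1 - a) ^ L * (1 + L * a) ≤ Real.exp (-(L * a)) * Real.exp (L * a) := by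
          apply mul_le_mul h2 h3 (by positivity) (Real.exp_pos _).le
      _ = 1 := by rw [← Real.exp_add]; simp
  rw [mul_one_div, le_div_iff₀ hL0]
  nlinarith

theorem prodMeasure_union {X : Type*} [Fintype X] [DecidableEq X] (p q : X → ℝ) (c : ℝ)
    (hp0 : ∀ x, 0 ≤ p x) (hp1 : ∀ x, p x ≤ 1) (hq0 : ∀ x, 0 ≤ q x)
    (h : ∀ x, (1 - p x) * q x ≤ p x * c) (W T : Finset X) (hd : Disjoint W T) :
    prodMeasure p W * ∏ x ∈ T, q x ≤ prodMeasure p (W ∪ T) * c ^ T.card := by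
  have hc : Wᶜ = T ∪ (W ∪ T)ᶜ := by
    ext x
    have : x ∈ T → x ∉ W := fun hx hw => (Finset.disjoint_left.mp hd hw hx)
    simp only [Finset.mem_compl, Finset.mem_union]; tauto
  have hd2 : Disjoint T (W ∪ T)ᶜ := by
    rw [Finset.disjoint_left]; intro x hx; simp [hx]
  unfold prodMeasure
  rw [hc, Finset.prod_union hd2, Finset.prod_union hd]
  have hT : (∏ x ∈ T, (1 - p x)) * ∏ x ∈ T, q x ≤ (∏ x ∈ T, p x) * c ^ T.card := by
    rw [← Finset.prod_const, ← Finset.prod_mul_distrib, ← Finset.prod_mul_distrib]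
    exact Finset.prod_le_prod
      (fun x _ => mul_nonneg (by linarith [hp1 x]) (hq0 x)) (fun x _ => h x)
  have hA : 0 ≤ ∏ x ∈ W, p x := Finset.prod_nonneg fun x _ => hp0 x
  have hB : 0 ≤ ∏ x ∈ (W ∪ T)ᶜ, (1 - p x) :=
    Finset.prod_nonneg fun x _ => by linarith [hp1 x]
  have := mul_le_mul_of_nonneg_left hT (mul_nonneg hA hB)
  linarith

theorem qCost_le {X : Type*} [Fintype X] [DecidableEq X] (q : X → ℝ) (hq0 : ∀ x, 0 ≤ q x)
    (H : Finset (Finset X)) : qCost q H ≤ eCost q H := by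
  apply csInf_le
  · refine ⟨0, ?_⟩
    rintro c ⟨G, _, rfl⟩
    exact Finset.sum_nonneg fun S _ => Finset.prod_nonneg fun x _ => hq0 x
  · refine ⟨H, ?_, rfl⟩
    intro S hS
    simp only [upClosure, Finset.mem_filter, Finset.mem_univ, true_and]
    exact ⟨S, hS, subset_rfl⟩

theorem largeFrag_props {X : Type*} [DecidableEq X] (m : ℕ)
    (H : Finset (Finset X)) (W T : Finset X) (hT : T ∈ largeFrag m H W) :
    m ≤ T.card ∧ Disjoint W T ∧ (∃ S ∈ H, S ⊆ W ∪ T) ∧ ∀ S ∈ H, S ⊆ W ∪ T → T ⊆ S := by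
  obtain ⟨hT1, hm⟩ := Finset.mem_filter.mp hT
  obtain ⟨hT2, hmin⟩ := Finset.mem_filter.mp hT1
  obtain ⟨S, hS, rfl⟩ := Finset.mem_image.mp hT2
  refine ⟨hm, Finset.disjoint_sdiff, ⟨S, hS, ?_⟩, ?_⟩
  · intro x hx; simp [hx]
  · intro S' hS' hsub
    have h1 : S' \ W ⊆ S \ W := by
      intro x hx
      rw [Finset.mem_sdiff] at hx
      have := hsub hx.1
      rw [Finset.mem_union] at this
      tauto
    rw [← hmin _ (Finset.mem_image.mpr ⟨S', hS', rfl⟩) h1]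
    exact Finset.sdiff_subset

theorem sum_subsets_le {X : Type*} [DecidableEq X] (c : ℝ) (hc : 0 ≤ c) (ℓ m : ℕ)
    (S : Finset X) (hS : S.card ≤ ℓ) :
    ∑ T ∈ S.powerset.filter (fun T => m ≤ T.card), c ^ T.card ≤
      ∑ j ∈ Finset.Icc m ℓ, c ^ j * (ℓ.choose j : ℝ) := by
  rw [← Finset.sum_fiberwise_of_maps_to (t := Finset.Icc m ℓ) (g := Finset.card)]
  · apply Finset.sum_le_sum
    intro j hj
    have : ∀ T ∈ (S.powerset.filter (fun T => m ≤ T.card)).filter (fun T => T.card = j),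
        c ^ T.card = c ^ j := by
      intro T hT; rw [(Finset.mem_filter.mp hT).2]
    rw [Finset.sum_congr rfl this, Finset.sum_const, nsmul_eq_mul, mul_comm]
    apply mul_le_mul_of_nonneg_left _ (pow_nonneg hc j)
    norm_cast
    calc _ ≤ (S.powersetCard j).card := by
          apply Finset.card_le_card
          intro T hT
          simp only [Finset.mem_filter, Finset.mem_powerset] at hT
          exact Finset.mem_powersetCard.mpr ⟨hT.1.1, hT.2⟩
      _ = S.card.choose j := Finset.card_powersetCard j S
      _ ≤ ℓ.choose j := Nat.choose_le_choose j hS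
  · intro T hT
    simp only [Finset.mem_filter, Finset.mem_powerset] at hT
    exact Finset.mem_Icc.mpr ⟨hT.2, (Finset.card_le_card hT.1).trans hS⟩

/-- Lemma 1: for `p_x = 1 - (1-q_x)^L` and `ℓ`-bounded `H`,
`E[c_q(L_m(H, X_p))] ≤ Pr[X_p ∈ ⟨H⟩] · Σ_{j=m}^{ℓ} L^{-j} · C(ℓ, j)`. -/
theorem cost_lemma {X : Type*} [Fintype X] [DecidableEq X]
    (L : ℝ) (hL : 1 ≤ L) (ℓ m : ℕ) (hm : 1 ≤ m) (hmℓ : m ≤ ℓ)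
    (q : X → ℝ) (hq : ∀ x, q x ∈ Set.Ioo (0 : ℝ) 1)
    (p : X → ℝ) (hp : ∀ x, p x = 1 - (1 - q x) ^ L)
    (H : Finset (Finset X)) (hbd : ∀ S ∈ H, S.card ≤ ℓ) :
    ∑ W : Finset X, prodMeasure p W * qCost q (largeFrag m H W) ≤
      prInUpClosure p H * ∑ j ∈ Finset.Icc m ℓ, (1 / L ^ j) * (ℓ.choose j : ℝ) := by
  classical
  have hL0 : 0 < L := by linarith
  have hq0 : ∀ x, 0 ≤ q x := fun x => (hq x).1.le
  have hp0 : ∀ x, 0 ≤ p x := fun x => by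
    rw [hp, sub_nonneg]
    exact Real.rpow_le_one (by linarith [(hq x).2]) (by linarith [(hq x).1]) hL0.le
  have hp1 : ∀ x, p x ≤ 1 := fun x => by
    rw [hp]
    have := Real.rpow_nonneg (x := 1 - q x) (by linarith [(hq x).2]) L
    linarith
  have hk : ∀ x, (1 - p x) * q x ≤ p x * (1 / L) := fun x => by
    rw [hp, sub_sub_cancel]
    exact key_ineq L (q x) hL (hq x).1 (hq x).2
  have hμ : ∀ W, 0 ≤ prodMeasure p W := fun W => mul_nonneg
    (Finset.prod_nonneg fun x _ => hp0 x)
    (Finset.prod_nonneg fun x _ => by linarith [hp1 x])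
  have hc : 0 ≤ 1 / L := by positivity
  have hch : ∀ Z : Finset X, ∃ S : Finset X, Z ∈ upClosure H → S ∈ H ∧ S ⊆ Z := by
    intro Z
    by_cases hZ : Z ∈ upClosure H
    · obtain ⟨S, h1, h2⟩ := (Finset.mem_filter.mp hZ).2
      exact ⟨S, fun _ => ⟨h1, h2⟩⟩
    · exact ⟨∅, fun h => absurd h hZ⟩
  choose s hs using hch
  let A : Finset ((_ : Finset X) × Finset X) := Finset.univ.sigma (fun W => largeFrag m H W)
  let B : Finset ((_ : Finset X) × Finset X) :=
    (upClosure H).sigma (fun Z => (s Z).powerset.filter (fun T => m ≤ T.card))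
  let f : ((_ : Finset X) × Finset X) → ((_ : Finset X) × Finset X) :=
    fun a => ⟨a.1 ∪ a.2, a.2⟩
  let G : ((_ : Finset X) × Finset X) → ℝ := fun a => prodMeasure p a.1 * (1 / L) ^ a.2.card
  have hA : ∀ a ∈ A, a.2 ∈ largeFrag m H a.1 := fun a ha => (Finset.mem_sigma.mp ha).2
  have hinj : Set.InjOn f (A : Set ((_ : Finset X) × Finset X)) := by
    rintro ⟨W, T⟩ ha ⟨W', T'⟩ hb hab
    have d1 := (largeFrag_props m H _ _ (hA _ ha)).2.1
    have d2 := (largeFrag_props m H _ _ (hA _ hb)).2.1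
    simp only [f, Sigma.mk.injEq, heq_eq_eq] at hab d1 d2 ⊢
    obtain ⟨h1, rfl⟩ := hab
    refine ⟨?_, rfl⟩
    rw [← Finset.union_sdiff_cancel_right d1, h1, Finset.union_sdiff_cancel_right d2]
  have hsub : A.image f ⊆ B := by
    intro b hb
    obtain ⟨⟨W, T⟩, ha, rfl⟩ := Finset.mem_image.mp hb
    obtain ⟨h1, h2, h3, h4⟩ := largeFrag_props m H _ _ (hA _ ha)
    have hZ : W ∪ T ∈ upClosure H := Finset.mem_filter.mpr ⟨Finset.mem_univ _, h3⟩
    refine Finset.mem_sigma.mpr ⟨hZ, ?_⟩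
    refine Finset.mem_filter.mpr ⟨Finset.mem_powerset.mpr ?_, h1⟩
    exact h4 _ (hs _ hZ).1 (hs _ hZ).2
  calc ∑ W : Finset X, prodMeasure p W * qCost q (largeFrag m H W)
      ≤ ∑ W : Finset X, ∑ T ∈ largeFrag m H W, prodMeasure p W * ∏ x ∈ T, q x := by
        apply Finset.sum_le_sum
        intro W _
        rw [← Finset.mul_sum]
        exact mul_le_mul_of_nonneg_left (qCost_le q hq0 _) (hμ W)
    _ = ∑ a ∈ A, prodMeasure p a.1 * ∏ x ∈ a.2, q x := by
        rw [Finset.sum_sigma]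
    _ ≤ ∑ a ∈ A, G (f a) := by
        apply Finset.sum_le_sum
        intro a ha
        exact prodMeasure_union p q _ hp0 hp1 hq0 hk _ _ (largeFrag_props m H _ _ (hA _ ha)).2.1
    _ = ∑ b ∈ A.image f, G b := (Finset.sum_image hinj).symm
    _ ≤ ∑ b ∈ B, G b := by
        apply Finset.sum_le_sum_of_subset_of_nonneg hsub
        intro b _ _
        exact mul_nonneg (hμ _) (pow_nonneg hc _)
    _ = ∑ Z ∈ upClosure H, prodMeasure p Z *
          ∑ T ∈ (s Z).powerset.filter (fun T => m ≤ T.card), (1 / L) ^ T.card := by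
        rw [Finset.sum_sigma]
        simp only [G, Finset.mul_sum]
    _ ≤ ∑ Z ∈ upClosure H, prodMeasure p Z *
          ∑ j ∈ Finset.Icc m ℓ, (1 / L ^ j) * (ℓ.choose j : ℝ) := by
        apply Finset.sum_le_sum
        intro Z hZ
        apply mul_le_mul_of_nonneg_left _ (hμ Z)
        have := sum_subsets_le (1 / L) hc ℓ m (s Z) (hbd _ (hs Z hZ).1)
        simpa only [one_div_pow] using this
    _ = _ := by rw [prInUpClosure, Finset.sum_mul]
end

section
/- Let X be a finite set, L ≥ 1 a real number, q ∈ (0,1)^X, and define p ∈ (0,1)^X by p_x = 1 - (1 - q_x)^L for each x ∈ X. If H ⊆ 2^X is 1-bounded (every member of H is a singleton or empty; in fact all members are singletons), then E[c_q(L_1(H, X_p))] ≤ 1/(e·L), where the expectation is over the random set X_p sampled from μ_p. -/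
lemma aux_qCost_le {X : Type*} [Fintype X] [DecidableEq X] (q : X → ℝ)
    (hq : ∀ x, q x ∈ Set.Ioo (0 : ℝ) 1) (H G : Finset (Finset X)) (h : H ⊆ upClosure G) :
    qCost q H ≤ eCost q G := by
  unfold qCost
  refine csInf_le ⟨0, ?_⟩ ⟨G, h, rfl⟩
  rintro c ⟨G', -, rfl⟩
  exact Finset.sum_nonneg fun S _ => Finset.prod_nonneg fun x _ => (hq x).1.le

lemma aux_large_empty {X : Type*} [Fintype X] [DecidableEq X]
    (H : Finset (Finset X)) (W : Finset X) (h : ∅ ∈ fragments H W) :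
    largeFrag 1 H W = ∅ := by
  unfold largeFrag minFragments
  rw [Finset.eq_empty_iff_forall_notMem]
  intro T hT
  simp only [Finset.mem_filter] at hT
  have := hT.1.2 ∅ h (Finset.empty_subset _)
  have h2 := hT.2
  rw [← this] at h2
  simp at h2

lemma aux_qCost_empty {X : Type*} [Fintype X] [DecidableEq X] (q : X → ℝ)
    (hq : ∀ x, q x ∈ Set.Ioo (0 : ℝ) 1)
    (H : Finset (Finset X)) (W : Finset X) (h : ∅ ∈ fragments H W) :
    qCost q (largeFrag 1 H W) ≤ 0 := by
  rw [aux_large_empty H W h]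
  refine (aux_qCost_le q hq ∅ ∅ (Finset.empty_subset _)).trans ?_
  simp [eCost]

lemma aux_prob {X : Type*} [Fintype X] [DecidableEq X] (p : X → ℝ) (Y : Finset X) :
    ∑ W : Finset X, prodMeasure p W * (if Disjoint W Y then 1 else 0) = ∏ x ∈ Y, (1 - p x) := by
  have h := Fintype.prod_add (fun x => if x ∈ Y then 0 else p x) (fun x => 1 - p x)
  have h1 : ∏ x, ((if x ∈ Y then 0 else p x) + (1 - p x)) = ∏ x ∈ Y, (1 - p x) := by
    rw [← Finset.prod_subset (Finset.subset_univ Y)]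
    · exact Finset.prod_congr rfl fun x hx => by simp [hx]
    · intro x _ hx
      simp [hx]
  rw [← h1, h]
  refine Finset.sum_congr rfl fun W _ => ?_
  unfold prodMeasure
  split_ifs with hd
  · rw [mul_one]
    congr 1
    exact Finset.prod_congr rfl fun x hx => by simp [Finset.disjoint_left.1 hd hx]
  · rw [Finset.not_disjoint_iff] at hd
    obtain ⟨x, hx, hy⟩ := hd
    rw [mul_zero, Finset.prod_eq_zero hx (by simp [hy]), zero_mul]

/-- Lemma 2: for `p_x = 1 - (1-q_x)^L` and `1`-bounded `H`,
`E[c_q(L_1(H, X_p))] ≤ 1/(eL)`. -/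
theorem cost_lemma_one_bounded {X : Type*} [Fintype X] [DecidableEq X]
    (L : ℝ) (hL : 1 ≤ L)
    (q : X → ℝ) (hq : ∀ x, q x ∈ Set.Ioo (0 : ℝ) 1)
    (p : X → ℝ) (hp : ∀ x, p x = 1 - (1 - q x) ^ L)
    (H : Finset (Finset X)) (hbd : ∀ S ∈ H, S.card ≤ 1) :
    ∑ W : Finset X, prodMeasure p W * qCost q (largeFrag 1 H W) ≤
      1 / (Real.exp 1 * L) := by
  have hp01 : ∀ x, 0 ≤ p x ∧ 0 ≤ 1 - p x ∧ 1 - p x ≤ Real.exp (-(L * q x)) := by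
    intro x
    obtain ⟨h0, h1⟩ := hq x
    have h2 : (0:ℝ) ≤ 1 - q x := by linarith
    rw [hp x, sub_sub_cancel]
    refine ⟨sub_nonneg.2 (Real.rpow_le_one h2 (by linarith) (by linarith)),
      Real.rpow_nonneg h2 _, ?_⟩
    have h3 : 1 - q x ≤ Real.exp (-q x) := by
      have := Real.add_one_le_exp (-q x); linarith
    calc (1 - q x) ^ L ≤ (Real.exp (-q x)) ^ L := Real.rpow_le_rpow h2 h3 (by linarith)
      _ = _ := by rw [← Real.exp_mul]; congr 1; ring
  have hm : ∀ W, 0 ≤ prodMeasure p W := fun W =>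
    mul_nonneg (Finset.prod_nonneg fun x _ => (hp01 x).1)
      (Finset.prod_nonneg fun x _ => (hp01 x).2.1)
  have hpos : 0 < Real.exp 1 * L := by positivity
  by_cases hE : ∅ ∈ H
  · refine (Finset.sum_nonpos fun W _ => ?_).trans (one_div_pos.2 hpos).le
    refine mul_nonpos_of_nonneg_of_nonpos (hm W) (aux_qCost_empty q hq H W ?_)
    exact Finset.mem_image.2 ⟨∅, hE, by simp⟩
  set Y : Finset X := Finset.univ.filter (fun x => {x} ∈ H) with hY
  have hHY : H = Y.image (fun x => ({x} : Finset X)) := by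
    ext S
    simp only [Finset.mem_image, hY, Finset.mem_filter, Finset.mem_univ, true_and]
    constructor
    · intro hS
      have h1 := hbd S hS
      have h2 : S.card ≠ 0 := fun h => hE (Finset.card_eq_zero.1 h ▸ hS)
      obtain ⟨x, rfl⟩ := Finset.card_eq_one.1 (show S.card = 1 by omega)
      exact ⟨x, hS, rfl⟩
    · rintro ⟨x, hx, rfl⟩
      exact hx
  set s : ℝ := ∑ x ∈ Y, q x with hs
  have hcost : eCost q H = s := by
    unfold eCost
    rw [hHY, Finset.sum_image (fun a _ b _ h => Finset.singleton_injective h)]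
    simp [hs]
  have hs0 : 0 ≤ s := Finset.sum_nonneg fun x _ => (hq x).1.le
  have hb : ∀ W, qCost q (largeFrag 1 H W) ≤ (if Disjoint W Y then 1 else 0) * s := by
    intro W
    split_ifs with hd
    · rw [one_mul, ← hcost]
      refine aux_qCost_le q hq _ _ fun T hT => ?_
      simp only [largeFrag, minFragments, fragments, Finset.mem_filter, Finset.mem_image] at hT
      obtain ⟨⟨⟨S, hS, rfl⟩, -⟩, -⟩ := hT
      refine Finset.mem_filter.2 ⟨Finset.mem_univ _, S, hS, ?_⟩
      rw [hHY] at hS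
      obtain ⟨x, hx, rfl⟩ := Finset.mem_image.1 hS
      have : x ∉ W := Finset.disjoint_right.1 hd hx
      simp [this]
    · rw [zero_mul]
      rw [Finset.not_disjoint_iff] at hd
      obtain ⟨x, hx, hy⟩ := hd
      refine aux_qCost_empty q hq H W (Finset.mem_image.2 ⟨{x}, (Finset.mem_filter.1 hy).2, ?_⟩)
      simp [hx]
  calc ∑ W : Finset X, prodMeasure p W * qCost q (largeFrag 1 H W)
      ≤ ∑ W : Finset X, prodMeasure p W * (if Disjoint W Y then 1 else 0) * s :=
        Finset.sum_le_sum fun W _ => by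
          rw [mul_assoc]
          exact mul_le_mul_of_nonneg_left (hb W) (hm W)
    _ = (∏ x ∈ Y, (1 - p x)) * s := by rw [← Finset.sum_mul, aux_prob]
    _ ≤ (∏ x ∈ Y, Real.exp (-(L * q x))) * s :=
        mul_le_mul_of_nonneg_right
          (Finset.prod_le_prod (fun x _ => (hp01 x).2.1) fun x _ => (hp01 x).2.2) hs0
    _ = Real.exp (-(L * s)) * s := by
        rw [← Real.exp_sum, Finset.sum_neg_distrib, ← Finset.mul_sum]
    _ ≤ 1 / (Real.exp 1 * L) := by
        rw [le_div_iff₀ hpos]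
        have h1 := Real.add_one_le_exp (L * s - 1)
        have h2 : Real.exp (-(L * s)) * Real.exp 1 * Real.exp (L * s - 1) = 1 := by
          rw [← Real.exp_add, ← Real.exp_add]; simp
        have h3 : 0 < Real.exp (-(L * s)) * Real.exp 1 := by positivity
        nlinarith [mul_le_mul_of_nonneg_left h1 h3.le]
end

section
/- For every real L ≥ 1, the function f(q) = q(1-q)^L / (1 - (1-q)^L) is decreasing on (0,1), its limit as q → 0⁺ equals 1/L, and consequently f(q) ≤ 1/L for all q ∈ (0,1). -/
theorem aux_convex (L : ℝ) (hL : 1 ≤ L) :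
    StrictConvexOn ℝ (Set.Ioi (0 : ℝ)) (fun x : ℝ => x ^ (-L)) := by
  apply StrictMonoOn.strictConvexOn_of_deriv (convex_Ioi 0)
  · intro x hx
    exact (Real.continuousAt_rpow_const x (-L) (Or.inl (ne_of_gt hx))).continuousWithinAt
  · rw [interior_Ioi]
    intro x hx y hy hxy
    rw [Real.deriv_rpow_const, Real.deriv_rpow_const]
    have := Real.rpow_lt_rpow_of_neg (z := -L - 1) hx hxy (by linarith)
    nlinarith

theorem aux_form (L : ℝ) (hL : 1 ≤ L) (q : ℝ) (hq : q ∈ Set.Ioo (0 : ℝ) 1) :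
    q * (1 - q) ^ L / (1 - (1 - q) ^ L) =
      (-(((1 - q) ^ (-L) - (1 : ℝ) ^ (-L)) / ((1 - q) - 1)))⁻¹ := by
  obtain ⟨h0, h1⟩ := hq
  have hx : 0 < 1 - q := by linarith
  have hp : 0 < (1 - q) ^ L := Real.rpow_pos_of_pos hx L
  have hp1 : (1 - q) ^ L < 1 := Real.rpow_lt_one hx.le (by linarith) (by linarith)
  rw [Real.rpow_neg hx.le, Real.one_rpow]
  generalize (1 - q) ^ L = p at *
  have h2 : 1 - p ≠ 0 := by linarith
  have h3 : (1 - q - 1) = -q := by ring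
  have h4 : p⁻¹ - 1 = (1 - p) / p := by field_simp
  rw [h3, h4]
  field_simp

/-- for `L ≥ 1`, the function `f(q) = q(1−q)^L / (1 − (1−q)^L)` is
decreasing on `(0,1)`, tends to `1/L` as `q → 0⁺`, and satisfies `f(q) ≤ 1/L` on `(0,1)`. -/
theorem q_ratio_decreasing_limit_bound (L : ℝ) (hL : 1 ≤ L)
    (f : ℝ → ℝ) (hf : ∀ q : ℝ, f q = q * (1 - q) ^ L / (1 - (1 - q) ^ L)) :
    StrictAntiOn f (Set.Ioo (0 : ℝ) 1) ∧
    Filter.Tendsto f (nhdsWithin 0 (Set.Ioi (0 : ℝ))) (nhds (1 / L)) ∧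
    ∀ q ∈ Set.Ioo (0 : ℝ) 1, f q ≤ 1 / L := by
  have hanti : StrictAntiOn f (Set.Ioo (0 : ℝ) 1) := by
    intro q hq r hr hqr
    rw [hf, hf, aux_form L hL q hq, aux_form L hL r hr]
    obtain ⟨hq0, hq1⟩ := hq
    obtain ⟨hr0, hr1⟩ := hr
    have key := (aux_convex L hL).secant_strict_mono (a := 1) (x := 1 - r) (y := 1 - q)
      (Set.mem_Ioi.2 one_pos) (Set.mem_Ioi.2 (by linarith)) (Set.mem_Ioi.2 (by linarith))
      (by linarith) (by linarith) (by linarith)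
    have hneg : ((1 - q) ^ (-L) - (1 : ℝ) ^ (-L)) / ((1 - q) - 1) < 0 := by
      apply div_neg_of_pos_of_neg _ (by linarith)
      rw [Real.one_rpow]
      have := Real.one_lt_rpow_of_pos_of_lt_one_of_neg (x := 1 - q) (z := -L)
        (by linarith) (by linarith) (by linarith)
      linarith
    exact inv_strictAnti₀ (by linarith) (by linarith)
  have hev : ∀ q : ℝ, 0 < q → Set.Ioo 0 q ∈ nhdsWithin 0 (Set.Ioi (0 : ℝ)) :=
    fun q hq => Ioo_mem_nhdsGT hq
  have hlim : Filter.Tendsto f (nhdsWithin 0 (Set.Ioi (0 : ℝ))) (nhds (1 / L)) := by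
    have hd : HasDerivAt (fun x : ℝ => x ^ (-L)) (-L) 1 := by
      have := Real.hasDerivAt_rpow_const (x := 1) (p := -L) (Or.inl one_ne_zero)
      simpa using this
    rw [hasDerivAt_iff_tendsto_slope] at hd
    have ht : Filter.Tendsto (fun q : ℝ => 1 - q) (nhdsWithin 0 (Set.Ioi (0 : ℝ)))
        (nhdsWithin 1 {1}ᶜ) := by
      apply tendsto_nhdsWithin_iff.2 ⟨_, _⟩
      · have : Filter.Tendsto (fun q : ℝ => 1 - q) (nhds 0) (nhds (1 - 0)) :=
          (continuous_const.sub continuous_id).tendsto 0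
        rw [sub_zero] at this
        exact this.mono_left nhdsWithin_le_nhds
      · filter_upwards [self_mem_nhdsWithin] with q hq
        have : 0 < q := hq
        simp [this.ne']
    have h := ((hd.comp ht).neg).inv₀ (by linarith)
    rw [neg_neg, ← one_div] at h
    refine h.congr' ?_
    filter_upwards [hev 1 one_pos] with q hq
    rw [hf, aux_form L hL q hq]
    simp only [Function.comp, slope_def_field]
  refine ⟨hanti, hlim, fun q hq => ?_⟩
  apply ge_of_tendsto hlim
  filter_upwards [hev q hq.1] with r hr
  exact (hanti ⟨hr.1, hr.2.trans hq.2⟩ hq hr.2).le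
end

section
/- The infinite double series satisfies Σ_{i=8}^{∞} Σ_{j=2^{i-1}}^{2^i − 1} (1/4)^j · binom(2^i − 1, j) ≤ (1 + √2)/(12√π). -/
theorem aux_cb (m : ℕ) (hm : 1 ≤ m) :
    (m.centralBinom : ℝ) ≤ 4 ^ m / Real.sqrt (Real.pi * m) := by
  have h1 := Real.Wallis.le_W m
  rw [Real.Wallis.W_eq_factorial_ratio] at h1
  have hc : (m.centralBinom : ℝ) = ((2 * m).factorial : ℝ) / ((m.factorial : ℝ) ^ 2) := by
    rw [Nat.centralBinom_eq_two_mul_choose, Nat.cast_choose ℝ (by omega : m ≤ 2 * m)]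
    rw [show 2 * m - m = m by omega, sq]
  have hf : (0 : ℝ) < (m.factorial : ℝ) := by exact_mod_cast m.factorial_pos
  have hf2 : (0 : ℝ) < ((2 * m).factorial : ℝ) := by exact_mod_cast (2 * m).factorial_pos
  have hm' : (1 : ℝ) ≤ m := by exact_mod_cast hm
  have hpi := Real.pi_pos
  have hs : 0 < Real.sqrt (Real.pi * m) := Real.sqrt_pos.mpr (by positivity)
  set C : ℝ := (m.centralBinom : ℝ) with hC
  have hCpos : 0 < C := by rw [hc]; positivity
  have h2 : (2 * m + 1 : ℝ) / (2 * m + 2) * (Real.pi / 2) ≤ (4 ^ m) ^ 2 / (C ^ 2 * (2 * m + 1)) := by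
    refine h1.trans (le_of_eq ?_)
    have h4 : (2 : ℝ) ^ (4 * m) = (4 ^ m) ^ 2 := by
      rw [← pow_mul, mul_comm m 2, pow_mul, pow_mul]; norm_num
    rw [hc, h4]
    field_simp
  rw [le_div_iff₀ hs]
  refine (pow_le_pow_iff_left₀ (by positivity) (by positivity) two_ne_zero).mp ?_
  rw [mul_pow, Real.sq_sqrt (by positivity)]
  rw [le_div_iff₀ (by positivity)] at h2
  refine le_trans ?_ h2
  rw [div_mul_div_comm, div_mul_eq_mul_div, le_div_iff₀ (by positivity)]
  have : 0 ≤ C ^ 2 * Real.pi := by positivity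
  nlinarith

theorem aux_inner (m : ℕ) (hm : 1 ≤ m) :
    ∑ j ∈ Finset.Icc m (2 * m - 1), ((1 : ℝ) / 4) ^ j * ((2 * m - 1).choose j : ℝ)
      ≤ 2 / (3 * Real.sqrt (Real.pi * m)) := by
  have hcb : (2 : ℝ) * ((2 * m - 1).choose (m - 1) : ℝ) = m.centralBinom := by
    obtain ⟨k, rfl⟩ : ∃ k, m = k + 1 := ⟨m - 1, by omega⟩
    have h := Nat.choose_succ_succ (2 * k + 1) k
    have h3 := Nat.choose_symm_half k
    rw [Nat.centralBinom_eq_two_mul_choose, show 2 * (k + 1) = (2 * k + 1) + 1 by ring]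
    simp only [Nat.add_sub_cancel]
    norm_cast
    simp only [Nat.succ_eq_add_one] at h
    omega
  have hle : ∀ j, ((2 * m - 1).choose j : ℝ) ≤ (m.centralBinom : ℝ) / 2 := by
    intro j
    have := Nat.choose_le_middle j (2 * m - 1)
    rw [show (2 * m - 1) / 2 = m - 1 by omega] at this
    have h' : ((2 * m - 1).choose j : ℝ) ≤ ((2 * m - 1).choose (m - 1) : ℝ) := by exact_mod_cast this
    linarith
  have hgeo : ∑ j ∈ Finset.Icc m (2 * m - 1), ((1 : ℝ) / 4) ^ j ≤ 4 / 3 * (1 / 4) ^ m := by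
    rw [show Finset.Icc m (2 * m - 1) = Finset.Ico m (2 * m) by ext; simp; omega]
    refine (geom_sum_Ico_le_of_lt_one (by norm_num) (by norm_num)).trans (le_of_eq ?_)
    ring
  have h1 := aux_cb m hm
  calc _ ≤ ∑ j ∈ Finset.Icc m (2 * m - 1), ((1 : ℝ) / 4) ^ j * ((m.centralBinom : ℝ) / 2) := by
        gcongr with j; exact hle j
    _ = (∑ j ∈ Finset.Icc m (2 * m - 1), ((1 : ℝ) / 4) ^ j) * ((m.centralBinom : ℝ) / 2) := by
        rw [Finset.sum_mul]
    _ ≤ (4 / 3 * (1 / 4) ^ m) * ((4 ^ m / Real.sqrt (Real.pi * m)) / 2) := by gcongr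
    _ = (1 / 4 * 4) ^ m * (2 / (3 * Real.sqrt (Real.pi * m))) := by rw [mul_pow]; ring
    _ = _ := by norm_num

/-- `Σ_{i=8}^{∞} Σ_{j=2^{i−1}}^{2^i−1} 4^{−j} C(2^i−1, j) ≤ (1+√2)/(12√π)`.
(The outer sum is reindexed by `i = n + 8`.) -/
theorem tail_series_bound :
    ∑' n : ℕ, ∑ j ∈ Finset.Icc (2 ^ (n + 7)) (2 ^ (n + 8) - 1),
        ((1 : ℝ) / 4) ^ j * ((2 ^ (n + 8) - 1).choose j : ℝ)
      ≤ (1 + Real.sqrt 2) / (12 * Real.sqrt Real.pi) := by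
  have hs2 : Real.sqrt 2 ^ 2 = 2 := Real.sq_sqrt (by norm_num)
  have hs1 : 1 < Real.sqrt 2 := by
    rw [Real.lt_sqrt] <;> norm_num
  have hsp : 0 < Real.sqrt Real.pi := Real.sqrt_pos.mpr Real.pi_pos
  have hr : (Real.sqrt 2)⁻¹ < 1 := inv_lt_one_of_one_lt₀ hs1
  have hg := (hasSum_geometric_of_lt_one (by positivity) hr).mul_left
    (2 / (3 * Real.sqrt Real.pi * Real.sqrt 2 ^ 7))
  have hb : ∀ n : ℕ, ∑ j ∈ Finset.Icc (2 ^ (n + 7)) (2 ^ (n + 8) - 1),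
        ((1 : ℝ) / 4) ^ j * ((2 ^ (n + 8) - 1).choose j : ℝ) ≤
      2 / (3 * Real.sqrt Real.pi * Real.sqrt 2 ^ 7) * (Real.sqrt 2)⁻¹ ^ n := by
    intro n
    have h := aux_inner (2 ^ (n + 7)) Nat.one_le_two_pow
    rw [show 2 * 2 ^ (n + 7) = 2 ^ (n + 8) by ring] at h
    refine h.trans (le_of_eq ?_)
    have : Real.sqrt (Real.pi * ((2 ^ (n + 7) : ℕ) : ℝ)) = Real.sqrt Real.pi * Real.sqrt 2 ^ (n + 7) := by
      rw [Real.sqrt_mul Real.pi_pos.le]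
      congr 1
      rw [Real.sqrt_eq_iff_mul_self_eq (by positivity) (by positivity), ← sq, ← pow_mul, mul_comm,
        pow_mul, hs2]
      push_cast
      rfl
    rw [this, pow_add, inv_pow]
    field_simp
  have hsum := Summable.of_nonneg_of_le (fun n => by positivity) hb hg.summable
  refine (hsum.tsum_le_tsum hb hg.summable).trans ?_
  rw [hg.tsum_eq]
  apply le_of_eq
  have h7 : Real.sqrt 2 ^ 7 = 8 * Real.sqrt 2 := by
    rw [show Real.sqrt 2 ^ 7 = (Real.sqrt 2 ^ 2) ^ 3 * Real.sqrt 2 by ring, hs2]; norm_num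
  have hinv : (1 - (Real.sqrt 2)⁻¹)⁻¹ = Real.sqrt 2 * (1 + Real.sqrt 2) := by
    rw [inv_eq_iff_eq_inv]
    apply eq_inv_of_mul_eq_one_left
    field_simp
    nlinarith
  rw [h7, hinv]
  field_simp
  norm_num
end

section
/- With L = 6, the series bound Σ_{i=1}^{∞} Σ_{j=2^{i-1}}^{2^i − 1} (1/L)^j · binom(2^i − 1, j) ≤ 1/L + 3/L² + 1/L³ + 35/L⁴ + (4/L)^5/(2(1 − 4/L)) = 23/48 < 1/2 holds. -/
theorem block_le (m : ℕ) (hm : 1 ≤ m) :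
    ∑ j ∈ Finset.Icc m (2 * m - 1), (1 / 6 : ℝ) ^ j * ((2 * m - 1).choose j : ℝ)
      ≤ 3 / 2 * (2 / 3 : ℝ) ^ m - 3 / 2 * (2 / 3 : ℝ) ^ (2 * m) := by
  have h1 : ∀ j ∈ Finset.Icc m (2 * m - 1),
      (1 / 6 : ℝ) ^ j * ((2 * m - 1).choose j : ℝ) ≤ 1 / 2 * (2 / 3 : ℝ) ^ j := by
    intro j hj
    rw [Finset.mem_Icc] at hj
    have hc : ((2 * m - 1).choose j : ℝ) * 2 ≤ 4 ^ j := by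
      have ha : (2 * m - 1).choose j * 2 ≤ 4 ^ j := by
        calc (2 * m - 1).choose j * 2 ≤ 2 ^ (2 * m - 1) * 2 :=
              Nat.mul_le_mul_right _ (Nat.choose_le_two_pow _ _)
          _ = 2 ^ (2 * m - 1 + 1) := (pow_succ _ _).symm
          _ ≤ 2 ^ (2 * j) := Nat.pow_le_pow_right (by norm_num) (by omega)
          _ = 4 ^ j := by rw [pow_mul]; norm_num
      exact_mod_cast ha
    have he : (2 / 3 : ℝ) ^ j = (1 / 6) ^ j * 4 ^ j := by
      rw [← mul_pow]; norm_num
    rw [he]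
    have hp : (0 : ℝ) < (1 / 6) ^ j := by positivity
    nlinarith
  refine (Finset.sum_le_sum h1).trans ?_
  rw [← Finset.mul_sum]
  have hI : Finset.Icc m (2 * m - 1) = Finset.Ico m (2 * m) := by
    ext j
    simp only [Finset.mem_Icc, Finset.mem_Ico]
    omega
  rw [hI, geom_sum_Ico (by norm_num) (by omega)]
  apply le_of_eq
  ring

/-- with `L = 6`,
`Σ_{i=1}^{∞} Σ_{j=2^{i−1}}^{2^i−1} L^{−j} C(2^i−1, j)
  ≤ 1/L + 3/L² + 1/L³ + 35/L⁴ + (4/L)⁵/(2(1−4/L)) = 23/48 < 1/2`.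
(The outer sum is reindexed by `i = n + 1`.) -/
theorem series_bound_L_six (L : ℝ) (hL : L = 6) :
    (∑' n : ℕ, ∑ j ∈ Finset.Icc (2 ^ n) (2 ^ (n + 1) - 1),
        (1 / L) ^ j * ((2 ^ (n + 1) - 1).choose j : ℝ)
      ≤ 1 / L + 3 / L ^ 2 + 1 / L ^ 3 + 35 / L ^ 4 + (4 / L) ^ 5 / (2 * (1 - 4 / L))) ∧
    1 / L + 3 / L ^ 2 + 1 / L ^ 3 + 35 / L ^ 4 + (4 / L) ^ 5 / (2 * (1 - 4 / L))
      = 23 / 48 ∧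
    (23 / 48 : ℝ) < 1 / 2 := by
  subst hL
  refine ⟨?_, by norm_num, by norm_num⟩
  have hE : (1 / 6 + 3 / 6 ^ 2 + 1 / 6 ^ 3 + 35 / 6 ^ 4 + (4 / 6) ^ 5 / (2 * (1 - 4 / 6)) : ℝ)
      = 23 / 48 := by norm_num
  rw [hE]
  have hnn : ∀ n : ℕ, 0 ≤ ∑ j ∈ Finset.Icc (2 ^ n) (2 ^ (n + 1) - 1),
        (1 / 6 : ℝ) ^ j * ((2 ^ (n + 1) - 1).choose j : ℝ) := fun n =>
    Finset.sum_nonneg fun j _ => by positivity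
  have key : ∀ N : ℕ, ∑ n ∈ Finset.range (N + 3),
      ∑ j ∈ Finset.Icc (2 ^ n) (2 ^ (n + 1) - 1),
        (1 / 6 : ℝ) ^ j * ((2 ^ (n + 1) - 1).choose j : ℝ)
      ≤ 23 / 48 - 3 / 2 * (2 / 3 : ℝ) ^ (2 ^ (N + 3)) := by
    intro N
    induction N with
    | zero =>
      have e0 : Finset.Icc 1 1 = ({1} : Finset ℕ) := by decide
      have e1 : Finset.Icc 2 3 = ({2, 3} : Finset ℕ) := by decide
      have e2 : Finset.Icc 4 7 = ({4, 5, 6, 7} : Finset ℕ) := by decide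
      norm_num [Finset.sum_range_succ, e1, e2, Nat.choose]
    | succ k ih =>
      rw [show k + 1 + 3 = (k + 3) + 1 by ring, Finset.sum_range_succ]
      have hb := block_le (2 ^ (k + 3)) Nat.one_le_two_pow
      rw [← pow_succ'] at hb
      linarith
  refine Real.tsum_le_of_sum_range_le hnn fun N => ?_
  refine (Finset.sum_le_sum_of_subset_of_nonneg
    (Finset.range_mono (by omega : N ≤ N + 3)) fun i _ _ => hnn i).trans ?_
  have hp : (0 : ℝ) < (2 / 3 : ℝ) ^ (2 ^ (N + 3)) := by positivity
  linarith [key N]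
end

section
/- Let X be a finite set, q ∈ (0,1)^X, and let H' ⊆ 2^X be obtained from H ⊆ 2^X by an arbitrary (possibly random) choice of W ⊆ X as H' = F*(H, W) or a subset thereof. If W₁, …, W_i are independent random subsets of X, H₀ = H, and H_j depends only on H_{j−1} and W_j with H_j ⊆ F(H_{j−1}, W_j) for each j, then Pr[W_i ∈ ⟨H_{i−1}⟩] ≤ Pr[W₁ ∪ ⋯ ∪ W_i ∈ ⟨H⟩]. More precisely: for all subsets W₁, …, W_i ⊆ X, if W_i ∈ ⟨H_{i−1}⟩ where H_j := S_{m_j}(H_{j−1}, W_j) for given integers m_j ≥ 1, then W₁ ∪ ⋯ ∪ W_i ∈ ⟨H⟩. -/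
/-- The iterated families `H_0 = H`, `H_j = S_{m_j}(H_{j−1}, W_j)`. -/
def Hseq {X : Type*} [DecidableEq X] (H : Finset (Finset X)) (m : ℕ → ℕ)
    (W : ℕ → Finset X) : ℕ → Finset (Finset X)
  | 0 => H
  | j + 1 => smallFrag (m (j + 1)) (Hseq H m W j) (W (j + 1))

theorem Hseq_lift {X : Type*} [DecidableEq X]
    (H : Finset (Finset X)) (m : ℕ → ℕ) (W : ℕ → Finset X) (j : ℕ) :
    ∀ T ∈ Hseq H m W j, ∃ S ∈ H, S ⊆ T ∪ (Finset.Icc 1 j).sup W := by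
  induction j with
  | zero => exact fun T hT => ⟨T, hT, Finset.subset_union_left⟩
  | succ j ih =>
    intro T hT
    have h2 : T ∈ fragments (Hseq H m W j) (W (j + 1)) :=
      Finset.filter_subset _ _ (Finset.filter_subset _ _ hT)
    obtain ⟨U, hU, rfl⟩ := Finset.mem_image.1 h2
    obtain ⟨S, hS, hSU⟩ := ih U hU
    refine ⟨S, hS, fun x hx => ?_⟩
    have h1 := hSU hx
    simp only [Finset.mem_union, Finset.mem_sdiff, Finset.mem_sup, Finset.mem_Icc] at h1 ⊢
    rcases h1 with h1 | ⟨i, hi, hx⟩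
    · by_cases hw : x ∈ W (j + 1)
      · exact Or.inr ⟨j + 1, ⟨by omega, le_rfl⟩, hw⟩
      · exact Or.inl ⟨h1, hw⟩
    · exact Or.inr ⟨i, ⟨hi.1, by omega⟩, hx⟩

/-- for all subsets `W₁, …, W_k ⊆ X`, if `W_k ∈ ⟨H_{k−1}⟩` where
`H_j = S_{m_j}(H_{j−1}, W_j)`, then `W₁ ∪ ⋯ ∪ W_k ∈ ⟨H⟩`. -/
theorem union_in_upClosure_of_iterate {X : Type*} [Fintype X] [DecidableEq X]
    (H : Finset (Finset X)) (k : ℕ) (hk : 1 ≤ k)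
    (m : ℕ → ℕ) (hm : ∀ j, 1 ≤ m j) (W : ℕ → Finset X)
    (h : W k ∈ upClosure (Hseq H m W (k - 1))) :
    (Finset.Icc 1 k).sup W ∈ upClosure H := by
  simp only [upClosure, Finset.mem_filter, Finset.mem_univ, true_and] at h ⊢
  obtain ⟨T, hT, hTW⟩ := h
  obtain ⟨S, hS, hST⟩ := Hseq_lift H m W (k - 1) T hT
  refine ⟨S, hS, hST.trans (Finset.union_subset (hTW.trans ?_) ?_)⟩
  · exact Finset.le_sup (f := W) (Finset.mem_Icc.2 ⟨hk, le_rfl⟩)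
  · exact Finset.sup_mono (Finset.Icc_subset_Icc le_rfl (Nat.sub_le k 1))
end
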